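/- Let f₁,…,f_n be monotone nondecreasing linear functions, at least one of which is a constant function, and suppose there exists i with θ(f_i) ∈ (θ(β_min), θ(β_min)+π) (equivalently, β_OPT < β_min). Then a permutation σ of [n] is optimal if and only if σ = μ∘ρ where μ is a counterclockwise permutation satisfying θ(f^μ)+π ∈ [θ(f_{μ(t)}), θ(f_{μ(s)})]_{2π} with s and t the first and last indices i such that f_{μ(i)} is non-identical, and ρ is a permutation with ρ(i)=i for every i with q_μ ≤ i ≤ n. -/

import Mathlib

/-- A linear function `x ↦ a*x + b`. -/
structure LinFun where
  a : ℝ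
  b : ℝ

namespace LinFun

/-- Evaluation of a linear function. -/
def eval (f : LinFun) (x : ℝ) : ℝ := f.a * x + f.b

/-- Composition: `h.comp g` is the linear function `x ↦ h (g x)`. -/
def comp (h g : LinFun) : LinFun := ⟨h.a * g.a, h.a * g.b + h.b⟩

/-- The identical linear function `x ↦ x`. -/
def idf : LinFun := ⟨1, 0⟩

/-- `f` is the identical function (equivalently, its vector `(β f, 1 - α f)` is `(0,0)`,
i.e. its angle is `⊥`). -/
def IsId (f : LinFun) : Prop := f = idf

/-- The Euclidean norm of the vector `(β f, 1 - α f)` associated to `f`. -/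
noncomputable def vecNorm (f : LinFun) : ℝ := Real.sqrt (f.b ^ 2 + (1 - f.a) ^ 2)

/-- The polar angle in `[0, 2π)` of the vector `(β f, 1 - α f)` associated to `f`
(meaningful only when `f` is not identical). -/
noncomputable def theta (f : LinFun) : ℝ :=
  if 0 ≤ Complex.arg ⟨f.b, 1 - f.a⟩ then Complex.arg ⟨f.b, 1 - f.a⟩
  else Complex.arg ⟨f.b, 1 - f.a⟩ + 2 * Real.pi

end LinFun

/-- Congruence of angles modulo `2π`: `x ≡_{2π} y`. -/
def Cong (x y : ℝ) : Prop := ∃ k : ℤ, x - y = 2 * Real.pi * k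

/-- The set `[t1, t2]_{2π}`. -/
def Icc2pi (t1 t2 : ℝ) : Set ℝ :=
  {θ | ∃ l1 l2 : ℝ, Cong l1 t1 ∧ Cong l2 t2 ∧ 0 ≤ l2 - l1 ∧ l2 - l1 < 2 * Real.pi ∧
    θ ∈ Set.Icc l1 l2}

/-- The set `(t1, t2)_{2π}`. -/
def Ioo2pi (t1 t2 : ℝ) : Set ℝ :=
  {θ | ∃ l1 l2 : ℝ, Cong l1 t1 ∧ Cong l2 t2 ∧ 0 ≤ l2 - l1 ∧ l2 - l1 < 2 * Real.pi ∧
    θ ∈ Set.Ioo l1 l2}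

/-- Composite of a list of linear functions: `compList [g₁, …, g_m] = g_m ∘ ⋯ ∘ g₁`. -/
def compList (L : List LinFun) : LinFun := L.foldl (fun acc g => g.comp acc) LinFun.idf

/-- The list `f_{σ(1)}, …, f_{σ(n)}` (0-indexed positions). -/
def permList {n : ℕ} (f : Fin n → LinFun) (σ : Equiv.Perm (Fin n)) : List LinFun :=
  List.ofFn fun i => f (σ i)

/-- `f^σ = f_{σ(n)} ∘ ⋯ ∘ f_{σ(1)}`. -/
def permComp {n : ℕ} (f : Fin n → LinFun) (σ : Equiv.Perm (Fin n)) : LinFun :=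
  compList (permList f σ)

/-- The composite of the functions at the (0-indexed) positions `a, a+1, …, b` of `σ`:
`f_{σ(b)} ∘ ⋯ ∘ f_{σ(a)}` (in 0-indexed notation). -/
def segComp {n : ℕ} (f : Fin n → LinFun) (σ : Equiv.Perm (Fin n)) (a b : ℕ) : LinFun :=
  compList (((permList f σ).drop a).take (b + 1 - a))

/-- The composite corresponding to the `k`-shift `σ_k` of `σ`:
`f^{σ_k} = f_{σ(k)} ∘ ⋯ ∘ f_{σ(1)} ∘ f_{σ(n)} ∘ ⋯ ∘ f_{σ(k+1)}` (1-indexed notation). -/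
def shiftComp {n : ℕ} (f : Fin n → LinFun) (σ : Equiv.Perm (Fin n)) (k : ℕ) : LinFun :=
  compList ((permList f σ).rotate k)

/-- `σ` is a minimum (optimal) permutation for `f₁, …, f_n`. -/
def IsMinimum {n : ℕ} (f : Fin n → LinFun) (σ : Equiv.Perm (Fin n)) : Prop :=
  ∀ ρ : Equiv.Perm (Fin n), (permComp f σ).b ≤ (permComp f ρ).b

/-- `μ` belongs to the neighbourhood `N(σ)`: it is obtained from `σ` by swapping two
adjacent blocks of positions, `(l, …, m)` and `(m+1, …, r)` (0-indexed, `l ≤ m < r < n`). -/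
def InNbhd {n : ℕ} (σ μ : Equiv.Perm (Fin n)) : Prop :=
  ∃ (l m r : ℕ) (_ : l ≤ m) (_ : m < r) (_ : r < n),
    (∀ i : Fin n, (i.val < l ∨ r < i.val) → μ i = σ i) ∧
    (∀ i : Fin n, ∀ _ : l ≤ i.val, ∀ _ : i.val < l + r - m,
      μ i = σ ⟨i.val + m + 1 - l, by omega⟩) ∧
    (∀ i : Fin n, ∀ _ : l + r - m ≤ i.val, ∀ _ : i.val ≤ r,
      μ i = σ ⟨i.val + m - r, by omega⟩)

/-- `σ` is locally optimal for `f₁, …, f_n`. -/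
def LocallyOptimal {n : ℕ} (f : Fin n → LinFun) (σ : Equiv.Perm (Fin n)) : Prop :=
  ∀ μ : Equiv.Perm (Fin n), InNbhd σ μ → (permComp f σ).b ≤ (permComp f μ).b

/-- `σ` is counterclockwise: ignoring the identical functions, some rotation of the sequence
of angles `θ(f_{σ(1)}), …, θ(f_{σ(n)})` is nondecreasing. -/
def Counterclockwise {n : ℕ} (f : Fin n → LinFun) (σ : Equiv.Perm (Fin n)) : Prop :=
  ∃ c : ℕ, ∀ i j : Fin n, ¬ (f (σ i)).IsId → ¬ (f (σ j)).IsId →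
    ((c ≤ i.val ∧ i ≤ j) ∨ (i ≤ j ∧ j.val < c) ∨ (c ≤ i.val ∧ j.val < c)) →
    (f (σ i)).theta ≤ (f (σ j)).theta

/-- `f₁, …, f_n` are colinear: all vectors lie on one line through the origin. -/
def Colinear {n : ℕ} (f : Fin n → LinFun) : Prop :=
  ∃ lam : ℝ, ∀ i : Fin n,
    (f i).IsId ∨ Cong ((f i).theta) lam ∨ Cong ((f i).theta) (lam + Real.pi)

/-- `f₁, …, f_n` are potentially identical: some counterclockwise permutation composes
to the identical function. -/
def PotentiallyIdentical {n : ℕ} (f : Fin n → LinFun) : Prop :=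
  ∃ σ : Equiv.Perm (Fin n), Counterclockwise f σ ∧ (permComp f σ).IsId

/-- The ε-perturbation `f^{(ε)}` of a linear function. -/
noncomputable def epsPert (f : LinFun) (ε : ℝ) : LinFun := if f.a = 0 then ⟨ε, f.b⟩ else f

/-!
The sign of `sin (h.theta - g.theta)` decides which of `g ∘ h` and `h ∘ g` is smaller; taking `h`
constant, it also decides whether `g` moves a value up or down. Everything before the last constant
function is irrelevant to the value of an arrangement, so an optimal one may freely insert, delete
and swap functions after that constant. These exchanges force its shape: the last constant is
`bmin`, the functions after it lie in the closed arc from the angle of `bmin` to the angle of the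
final value plus `π` and are sorted by angle, and those before it lie outside the open arc.

Conversely, the shape determines the value. Of two arrangements of this shape, the one with the
smaller value has the larger arc, and the functions on the smaller open arc are the same in both and
come in the same order, up to functions of equal angle, which commute. They carry `bmin` to the
larger value, which the remaining functions of the other arrangement can only increase. So the two
values agree, and agree with the optimum, which is attained by an arrangement of this shape.

Sorting the functions before the last constant, with the angles cut open at the final value's angle
plus `π`, turns such an arrangement into a counterclockwise one without changing its value.
-/

open Real

attribute [ext] LinFun

namespace LinFun

section Composition

/-- The constant function with value `c`. -/
abbrev const (c : ℝ) : LinFun := ⟨0, c⟩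

variable {g k : LinFun} {L : List LinFun}

lemma eval_comp (h g : LinFun) (x : ℝ) : (h.comp g).eval x = h.eval (g.eval x) := by
  simp only [eval, comp]
  ring

lemma comp_assoc (k h g : LinFun) : (k.comp h).comp g = k.comp (h.comp g) := by
  ext <;> simp only [comp] <;> ring

@[simp] lemma comp_idf (g : LinFun) : g.comp idf = g := by
  ext <;> simp [comp, idf]

@[simp] lemma idf_comp (g : LinFun) : idf.comp g = g := by
  ext <;> simp [comp, idf]

@[simp] lemma idf_eval (x : ℝ) : idf.eval x = x := by
  simp [eval, idf]

lemma eval_of_a_eq_zero (hk : k.a = 0) (x : ℝ) : k.eval x = k.b := by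
  simp [eval, hk]

lemma not_isId_of_a_eq_zero (hk : k.a = 0) : ¬ k.IsId := by
  rintro rfl
  simp [idf] at hk

lemma eval_strictMono (hg : 0 < g.a) : StrictMono g.eval := fun x y hxy => by
  simpa only [eval, add_lt_add_iff_right] using mul_lt_mul_of_pos_left hxy hg

@[simp] lemma compList_nil : compList [] = idf := rfl

lemma foldl_comp (L : List LinFun) (h : LinFun) :
    L.foldl (fun acc g => g.comp acc) h = (compList L).comp h := by
  induction L generalizing h with
  | nil => rw [compList_nil, idf_comp, List.foldl_nil]
  | cons g L ih =>
    rw [compList, List.foldl_cons, List.foldl_cons, ih, ih (g.comp idf), comp_idf, comp_assoc]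

lemma compList_cons (g : LinFun) (L : List LinFun) :
    compList (g :: L) = (compList L).comp g := by
  rw [compList, List.foldl_cons, foldl_comp, comp_idf]

lemma compList_append (L M : List LinFun) :
    compList (L ++ M) = (compList M).comp (compList L) := by
  rw [compList, List.foldl_append, foldl_comp, ← compList]

lemma compList_cons_eval (g : LinFun) (L : List LinFun) (x : ℝ) :
    (compList (g :: L)).eval x = (compList L).eval (g.eval x) := by
  rw [compList_cons, eval_comp]

lemma compList_append_eval (L M : List LinFun) (x : ℝ) :
    (compList (L ++ M)).eval x = (compList M).eval ((compList L).eval x) := by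
  rw [compList_append, eval_comp]

lemma compList_a_pos (hL : ∀ g ∈ L, 0 < g.a) : 0 < (compList L).a := by
  induction L with
  | nil => exact one_pos
  | cons g L ih =>
    rw [compList_cons]
    exact mul_pos (ih fun h hh => hL h (.tail _ hh)) (hL g (.head _))

lemma compList_append_cons_of_a_eq_zero (hk : k.a = 0) (P S : List LinFun) :
    compList (P ++ k :: S) = const ((compList S).eval k.b) := by
  ext <;> simp [compList_append, compList_cons, comp, eval, hk]

lemma compList_eval_eq_self {x : ℝ} (hL : ∀ g ∈ L, g.eval x = x) : (compList L).eval x = x := by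
  induction L with
  | nil => exact idf_eval x
  | cons g L ih =>
    rw [compList_cons_eval, hL g (.head _), ih fun h hh => hL h (.tail _ hh)]

lemma le_compList_eval {x : ℝ} (ha : ∀ g ∈ L, 0 < g.a) (hL : ∀ g ∈ L, x ≤ g.eval x) :
    x ≤ (compList L).eval x := by
  induction L with
  | nil => exact (idf_eval x).ge
  | cons g L ih =>
    rw [List.forall_mem_cons] at ha hL
    rw [compList_cons_eval]
    exact (ih ha.2 hL.2).trans ((eval_strictMono (compList_a_pos ha.2)).monotone hL.1)

open Classical in
lemma compList_filter_not_isId (L : List LinFun) :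
    compList (L.filter (¬ ·.IsId)) = compList L := by
  induction L with
  | nil => rfl
  | cons g L ih =>
    by_cases hg : g.IsId
    · rw [List.filter_cons_of_neg (by simpa using hg), ih, compList_cons, hg, comp_idf]
    · rw [List.filter_cons_of_pos (by simpa using hg), compList_cons, compList_cons, ih]

end Composition

section Angle

variable {f g h : LinFun} {c x : ℝ}

lemma theta_nonneg (f : LinFun) : 0 ≤ f.theta := by
  unfold theta
  split_ifs with h
  · exact h
  · linarith [Complex.neg_pi_lt_arg ⟨f.b, 1 - f.a⟩, pi_pos]

lemma theta_lt_two_pi (f : LinFun) : f.theta < 2 * π := by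
  unfold theta
  split_ifs with h
  · linarith [Complex.arg_le_pi ⟨f.b, 1 - f.a⟩, pi_pos]
  · linarith

lemma not_isId_of_theta_pos (hf : 0 < f.theta) : ¬ f.IsId := by
  rintro rfl
  have : (⟨idf.b, 1 - idf.a⟩ : ℂ) = 0 := Complex.ext rfl (sub_self 1)
  rw [theta, this, Complex.arg_zero, if_pos le_rfl] at hf
  exact hf.false

lemma theta_mem_Ico (f : LinFun) : f.theta ∈ Set.Ico 0 (2 * π) :=
  ⟨theta_nonneg f, theta_lt_two_pi f⟩

lemma vecNorm_eq_norm (f : LinFun) : f.vecNorm = ‖(⟨f.b, 1 - f.a⟩ : ℂ)‖ := by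
  rw [vecNorm, Complex.norm_eq_sqrt_sq_add_sq]

lemma vecNorm_pos (hf : ¬ f.IsId) : 0 < f.vecNorm := by
  rw [vecNorm_eq_norm, norm_pos_iff]
  contrapose hf
  obtain ⟨hb, ha⟩ := Complex.ext_iff.mp hf
  exact LinFun.ext (sub_eq_zero.mp ha).symm hb

lemma vecNorm_mul_cos_theta (f : LinFun) : f.vecNorm * cos f.theta = f.b := by
  have : cos f.theta = cos (Complex.arg ⟨f.b, 1 - f.a⟩) := by
    unfold theta
    split_ifs <;> simp only [cos_add_two_pi]
  rw [this, vecNorm_eq_norm, Complex.norm_mul_cos_arg]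

lemma vecNorm_mul_sin_theta (f : LinFun) : f.vecNorm * sin f.theta = 1 - f.a := by
  have : sin f.theta = sin (Complex.arg ⟨f.b, 1 - f.a⟩) := by
    unfold theta
    split_ifs <;> simp only [sin_add_two_pi]
  rw [this, vecNorm_eq_norm, Complex.norm_mul_sin_arg]

-- The commutator of two affine maps is the cross product of their vectors.
lemma eval_eval_sub_eval_eval (g h : LinFun) (x : ℝ) :
    g.eval (h.eval x) - h.eval (g.eval x) =
      g.vecNorm * h.vecNorm * sin (h.theta - g.theta) := by
  rw [sin_sub]
  simp only [eval]
  linear_combination (-h.vecNorm * sin h.theta) * vecNorm_mul_cos_theta g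
    - g.b * vecNorm_mul_sin_theta h + h.vecNorm * cos h.theta * vecNorm_mul_sin_theta g
    + (1 - g.a) * vecNorm_mul_cos_theta h

lemma comp_comm_of_theta_eq (hgh : g.theta = h.theta) : g.comp h = h.comp g := by
  have hb := eval_eval_sub_eval_eval g h 0
  rw [hgh, sub_self, sin_zero, mul_zero, sub_eq_zero] at hb
  ext
  · exact mul_comm _ _
  · simpa [eval, comp] using hb

lemma sub_eval_self (g : LinFun) (c : ℝ) :
    c - g.eval c = g.vecNorm * (const c).vecNorm * sin (g.theta - (const c).theta) := by
  have := eval_eval_sub_eval_eval (const c) g c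
  simp only [const, eval, zero_mul, zero_add] at this ⊢
  rw [this, mul_comm g.vecNorm]

lemma sin_nonneg_iff_of_mem_Ioo (hx : x ∈ Set.Ioo (-π) (2 * π)) :
    0 ≤ sin x ↔ 0 ≤ x ∧ x ≤ π := by
  refine ⟨fun h => ⟨?_, ?_⟩, fun h => sin_nonneg_of_nonneg_of_le_pi h.1 h.2⟩ <;> contrapose! h
  · exact sin_neg_of_neg_of_neg_pi_lt h hx.1
  · rw [← sin_sub_two_pi]
    exact sin_neg_of_neg_of_neg_pi_lt (by linarith [hx.2]) (by linarith)

lemma sin_pos_iff_of_mem_Ioo (hx : x ∈ Set.Ioo (-π) (2 * π)) :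
    0 < sin x ↔ 0 < x ∧ x < π := by
  refine ⟨fun h => ⟨?_, ?_⟩, fun h => sin_pos_of_pos_of_lt_pi h.1 h.2⟩ <;> contrapose! h
  · exact sin_nonpos_of_nonpos_of_neg_pi_le h hx.1.le
  · rw [← sin_sub_two_pi]
    exact sin_nonpos_of_nonpos_of_neg_pi_le (by linarith [hx.2]) (by linarith)

lemma theta_const_mem_Ioo (c : ℝ) : (const c).theta ∈ Set.Ioo 0 π := by
  have hsin : 0 < sin (const c).theta := by
    have h := vecNorm_mul_sin_theta (const c)
    rw [show 1 - (const c).a = 1 from sub_zero 1] at h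
    exact pos_of_mul_pos_right (h ▸ one_pos) (sqrt_nonneg _)
  refine (sin_pos_iff_of_mem_Ioo ⟨?_, theta_lt_two_pi _⟩).mp hsin
  linarith [theta_nonneg (const c), pi_pos]

lemma theta_sub_theta_const_mem_Ioo (g : LinFun) (c : ℝ) :
    g.theta - (const c).theta ∈ Set.Ioo (-π) (2 * π) := by
  obtain ⟨h0, h1⟩ := theta_const_mem_Ioo c
  constructor <;> linarith [theta_nonneg g, theta_lt_two_pi g]

lemma vecNorm_mul_vecNorm_const_pos (hg : ¬ g.IsId) (c : ℝ) :
    0 < g.vecNorm * (const c).vecNorm :=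
  mul_pos (vecNorm_pos hg) (vecNorm_pos (not_isId_of_a_eq_zero rfl))

lemma eval_le_self_iff (hg : ¬ g.IsId) :
    g.eval c ≤ c ↔ g.theta ∈ Set.Icc (const c).theta ((const c).theta + π) := by
  rw [← sub_nonneg, sub_eval_self, mul_nonneg_iff_of_pos_left (vecNorm_mul_vecNorm_const_pos hg c),
    sin_nonneg_iff_of_mem_Ioo (theta_sub_theta_const_mem_Ioo g c), sub_nonneg, sub_le_iff_le_add',
    Set.mem_Icc]

lemma eval_lt_self_iff (hg : ¬ g.IsId) :
    g.eval c < c ↔ g.theta ∈ Set.Ioo (const c).theta ((const c).theta + π) := by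
  rw [← sub_pos, sub_eval_self, mul_pos_iff_of_pos_left (vecNorm_mul_vecNorm_const_pos hg c),
    sin_pos_iff_of_mem_Ioo (theta_sub_theta_const_mem_Ioo g c), sub_pos, sub_lt_iff_lt_add',
    Set.mem_Ioo]

lemma self_le_eval_iff (hg : ¬ g.IsId) :
    c ≤ g.eval c ↔ g.theta ≤ (const c).theta ∨ (const c).theta + π ≤ g.theta := by
  rw [← not_lt, eval_lt_self_iff hg, Set.mem_Ioo, not_and_or, not_lt, not_lt]

lemma eval_eq_self_of_theta (hg : g.theta = (const c).theta ∨ g.theta = (const c).theta + π) :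
    g.eval c = c := by
  refine (sub_eq_zero.mp ?_).symm
  rw [sub_eval_self]
  rcases hg with hg | hg <;> simp [hg]

lemma theta_const_strictAnti : StrictAnti fun c => (const c).theta := fun c d hcd => by
  have := (eval_lt_self_iff (g := const c) (c := d) (not_isId_of_a_eq_zero rfl)).mp
    (by simpa [eval] using hcd)
  exact this.1

end Angle

section AngularSplit

variable {c φ ψ v w : ℝ} {L M P P' S S' : List LinFun}

lemma filter_append_filter_not_of_pairwise {α : Type*} {p : α → Prop} [DecidablePred p]
    {l : List α} (hl : l.Pairwise fun a b => p b → p a) :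
    l.filter p ++ l.filter (¬ p ·) = l := by
  induction l with
  | nil => rfl
  | cons a l ih =>
    rw [List.pairwise_cons] at hl
    by_cases ha : p a
    · simpa [ha] using ih hl.2
    · have hp : ∀ b ∈ l, ¬ p b := fun b hb hpb => ha (hl.1 b hb hpb)
      rw [List.filter_eq_nil_iff.mpr (by simpa [ha] using hp), List.nil_append,
        List.filter_eq_self.mpr (by simpa [ha] using hp)]

lemma compList_append_cons_of_theta_eq {g : LinFun} {A : List LinFun}
    (hA : ∀ h ∈ A, h.theta = g.theta) (B : List LinFun) :
    compList (A ++ g :: B) = compList (g :: (A ++ B)) := by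
  induction A with
  | nil => rfl
  | cons h A ih =>
    rw [List.forall_mem_cons] at hA
    rw [List.cons_append, compList_cons, ih hA.2, compList_cons, compList_cons, List.cons_append,
      compList_cons, comp_assoc, comp_assoc, comp_comm_of_theta_eq hA.1]

lemma compList_eq_of_perm_of_sorted (hLM : L.Perm M)
    (hL : L.Pairwise fun g h => g.theta ≤ h.theta)
    (hM : M.Pairwise fun g h => g.theta ≤ h.theta) : compList L = compList M := by
  induction L generalizing M with
  | nil => rw [hLM.nil_eq]
  | cons g L ih =>
    obtain ⟨A, B, rfl⟩ := List.append_of_mem (hLM.subset (.head _))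
    rw [List.pairwise_cons] at hL
    have hLAB : L.Perm (A ++ B) := (hLM.trans List.perm_middle).cons_inv
    have hA : ∀ h ∈ A, h.theta = g.theta := fun h hh =>
      ((List.pairwise_append.mp hM).2.2 h hh g (.head _)).antisymm
        (hL.1 h (hLAB.symm.subset (List.mem_append_left _ hh)))
    rw [compList_append_cons_of_theta_eq hA, compList_cons, compList_cons,
      ih hLAB hL.2 (hM.sublist ((List.sublist_cons_self g B).append_left A))]

/-- The shape of an optimal arrangement `P, const c, S`: the nonidentical functions in the suffix
`S` appear in order of their angles, which lie between `(const c).theta` and `φ`, and the angles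
in the prefix `P` avoid the interior of that arc. The angle `φ` is meant to be
`(const v).theta + π`, where `v` is the value of the arrangement. -/
structure IsAngularSplit (c φ : ℝ) (P S : List LinFun) : Prop where
  theta_before : ∀ g ∈ P, ¬ g.IsId → g.theta ≤ (const c).theta ∨ φ ≤ g.theta
  theta_after : ∀ g ∈ S, ¬ g.IsId → g.theta ∈ Set.Icc (const c).theta φ
  sorted : S.Pairwise fun g h => ¬ g.IsId → ¬ h.IsId → g.theta ≤ h.theta

open Classical in
/-- The nonidentical members of a list whose angle lies strictly between `(const c).theta`
and `φ`. -/
noncomputable def openArc (c φ : ℝ) (L : List LinFun) : List LinFun :=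
  L.filter fun g => ¬ g.IsId ∧ g.theta ∈ Set.Ioo (const c).theta φ

namespace IsAngularSplit

lemma openArc_append (h : IsAngularSplit c φ P S) (hψ : ψ ≤ φ) :
    openArc c ψ (P ++ S) = openArc c ψ S := by
  classical
  rw [openArc, List.filter_append, openArc, List.append_left_eq_self, List.filter_eq_nil_iff]
  intro g hg
  rw [decide_eq_true_iff]
  rintro ⟨hid, hgc, hgψ⟩
  rcases h.theta_before g hg hid with h | h <;> linarith

lemma sorted_filter (h : IsAngularSplit c φ P S) {p : LinFun → Prop} [DecidablePred p]
    (hp : ∀ g, p g → ¬ g.IsId) : (S.filter p).Pairwise fun g h => g.theta ≤ h.theta := by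
  rw [List.pairwise_filter]
  refine h.sorted.imp fun {g k} hgk hg hk => ?_
  rw [decide_eq_true_iff] at hg hk
  exact hgk (hp g hg) (hp k hk)

lemma sorted_openArc (h : IsAngularSplit c φ P S) (ψ : ℝ) :
    (openArc c ψ S).Pairwise fun g h => g.theta ≤ h.theta := by
  classical
  exact h.sorted_filter fun _ hg => hg.1

-- The members of `S` at angle `(const c).theta` come first and fix `c`.
lemma exists_eval_eq (h : IsAngularSplit c φ P S) (ψ : ℝ) :
    ∃ B, (∀ g ∈ B, g ∈ S ∧ ¬ g.IsId ∧ ψ ≤ g.theta) ∧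
      (compList S).eval c = (compList B).eval ((compList (openArc c ψ S)).eval c) := by
  classical
  set N := S.filter (¬ ·.IsId) with hN
  have hsorted : N.Pairwise fun g h => g.theta ≤ h.theta := h.sorted_filter fun _ => id
  have hψ := filter_append_filter_not_of_pairwise (p := fun g : LinFun => g.theta < ψ)
    (hsorted.imp fun hgh hh => hgh.trans_lt hh)
  have hc := filter_append_filter_not_of_pairwise
    (p := fun g : LinFun => g.theta ≤ (const c).theta)
    ((hsorted.filter (·.theta < ψ)).imp fun hgh hh => hgh.trans hh)
  have harc : (N.filter (·.theta < ψ)).filter (¬ ·.theta ≤ (const c).theta) = openArc c ψ S := by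
    simp only [hN, openArc, List.filter_filter]
    congr
    ext g
    simp only [Set.mem_Ioo, ← Bool.decide_and, decide_eq_decide, not_le]
    tauto
  have hfix : ∀ g ∈ (N.filter (·.theta < ψ)).filter (·.theta ≤ (const c).theta),
      g.eval c = c := fun g hg => by
    simp only [hN, List.mem_filter, decide_eq_true_iff] at hg
    exact eval_eq_self_of_theta (.inl (hg.2.antisymm (h.theta_after g hg.1.1.1 hg.1.1.2).1))
  refine ⟨N.filter (¬ ·.theta < ψ), fun g hg => ?_, ?_⟩
  · simpa [hN, and_assoc, and_comm (a := ψ ≤ _)] using hg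
  · rw [← harc, ← compList_filter_not_isId S, ← hN]
    conv_lhs => rw [← hψ, ← hc, compList_append_eval, compList_append_eval,
      compList_eval_eq_self hfix]

lemma eval_openArc (h : IsAngularSplit c ((const v).theta + π) P S) (hS : ∀ g ∈ S, 0 < g.a)
    (hv : (compList S).eval c = v) :
    (compList (openArc c ((const v).theta + π) S)).eval c = v := by
  obtain ⟨B, hB, hBv⟩ := h.exists_eval_eq ((const v).theta + π)
  have hfix : (compList B).eval v = v := compList_eval_eq_self fun g hg =>
    eval_eq_self_of_theta
      (.inr ((h.theta_after g (hB g hg).1 (hB g hg).2.1).2.antisymm (hB g hg).2.2))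
  have hpos : 0 < (compList B).a := compList_a_pos fun g hg => hS g (hB g hg).1
  exact (eval_strictMono hpos).injective (by rw [← hBv, hv, hfix])

lemma le_of_perm (h : IsAngularSplit c ((const v).theta + π) P S) (hS : ∀ g ∈ S, 0 < g.a)
    (hv : (compList S).eval c = v) (h' : IsAngularSplit c ((const w).theta + π) P' S')
    (hS' : ∀ g ∈ S', 0 < g.a) (hw : (compList S').eval c = w)
    (hperm : (P ++ S).Perm (P' ++ S')) : v ≤ w := by
  by_contra! hwv
  have hφ : (const v).theta + π ≤ (const w).theta + π := by
    simpa using (theta_const_strictAnti hwv).le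
  obtain ⟨B, hB, hBw⟩ := h'.exists_eval_eq ((const v).theta + π)
  have harc : (openArc c ((const v).theta + π) S).Perm (openArc c ((const v).theta + π) S') := by
    rw [← h.openArc_append le_rfl, ← h'.openArc_append hφ]
    exact hperm.filter _
  rw [← compList_eq_of_perm_of_sorted harc (h.sorted_openArc _) (h'.sorted_openArc _),
    h.eval_openArc hS hv, hw] at hBw
  rw [hBw] at hwv
  refine hwv.not_ge (le_compList_eval (fun g hg => hS' g (hB g hg).1) fun g hg => ?_)
  exact (self_le_eval_iff (hB g hg).2.1).mpr (.inr (hB g hg).2.2)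

lemma eq_of_perm (h : IsAngularSplit c ((const v).theta + π) P S) (hS : ∀ g ∈ S, 0 < g.a)
    (hv : (compList S).eval c = v) (h' : IsAngularSplit c ((const w).theta + π) P' S')
    (hS' : ∀ g ∈ S', 0 < g.a) (hw : (compList S').eval c = w)
    (hperm : (P ++ S).Perm (P' ++ S')) : v = w :=
  (h.le_of_perm hS hv h' hS' hw hperm).antisymm (h'.le_of_perm hS' hw h hS hv hperm.symm)

end IsAngularSplit

end AngularSplit

section IsOptimalFrom

/-- Started from the value `c`, the list `S` attains the least value among all lists formed
from the members of `P ++ S`. -/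
def IsOptimalFrom (c : ℝ) (P S : List LinFun) : Prop :=
  ∀ L : List LinFun, L.Subperm (P ++ S) → (compList S).eval c ≤ (compList L).eval c

namespace IsOptimalFrom

variable {c : ℝ} {g h : LinFun} {P P' S S' A B : List LinFun}

lemma of_subperm (H : IsOptimalFrom c P S) (hsub : (P' ++ S').Subperm (P ++ S))
    (hS : (compList S').eval c = (compList S).eval c) : IsOptimalFrom c P' S' :=
  fun L hL => hS.trans_le (H L (hL.trans hsub))

lemma self_le_eval (H : IsOptimalFrom c P S) (hS : ∀ g ∈ S, 0 < g.a) (hg : g ∈ P) :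
    c ≤ g.eval c := by
  have hsub : (g :: S).Subperm (P ++ S) :=
    ((List.singleton_sublist.mpr hg).append_right S).subperm
  have := H _ hsub
  rwa [compList_cons_eval, (eval_strictMono (compList_a_pos hS)).le_iff_le] at this

lemma eval_le_eval_eval (H : IsOptimalFrom c P S) (hg : g ∈ P) :
    (compList S).eval c ≤ g.eval ((compList S).eval c) := by
  have hsub : (S ++ [g]).Subperm (P ++ S) :=
    List.perm_append_comm.subperm.trans ((List.singleton_sublist.mpr hg).append_right S).subperm
  have := H _ hsub
  rwa [compList_append_eval, compList_cons_eval, compList_nil, idf_eval] at this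

lemma eval_mem_Icc (H : IsOptimalFrom c P (A ++ B)) (hB : ∀ g ∈ B, 0 < g.a) :
    (compList A).eval c ∈ Set.Icc ((compList (A ++ B)).eval c) c := by
  refine ⟨H A ((List.sublist_append_left A B).trans (List.sublist_append_right ..)).subperm, ?_⟩
  have := H B ((List.sublist_append_right A B).trans (List.sublist_append_right ..)).subperm
  rwa [compList_append_eval, (eval_strictMono (compList_a_pos hB)).le_iff_le] at this

lemma eval_le_self (H : IsOptimalFrom c P (A ++ g :: B)) (hB : ∀ g ∈ B, 0 < g.a) :
    g.eval ((compList A).eval c) ≤ (compList A).eval c := by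
  have hsub : (A ++ B).Subperm (P ++ (A ++ g :: B)) :=
    (((List.sublist_cons_self g B).append_left A).trans (List.sublist_append_right ..)).subperm
  have := H _ hsub
  rwa [compList_append_eval, compList_append_eval, compList_cons_eval,
    (eval_strictMono (compList_a_pos hB)).le_iff_le] at this

lemma eval_eval_le (H : IsOptimalFrom c P (A ++ g :: h :: B)) (hB : ∀ g ∈ B, 0 < g.a) :
    h.eval (g.eval ((compList A).eval c)) ≤ g.eval (h.eval ((compList A).eval c)) := by
  have hsub : (A ++ h :: g :: B).Subperm (P ++ (A ++ g :: h :: B)) :=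
    (((List.Perm.swap g h B).append_left A).subperm).trans
      (List.sublist_append_right ..).subperm
  have := H _ hsub
  rwa [compList_append_eval, compList_append_eval, compList_cons_eval, compList_cons_eval,
    compList_cons_eval, compList_cons_eval, (eval_strictMono (compList_a_pos hB)).le_iff_le]
    at this

lemma theta_before (H : IsOptimalFrom c P S) (hS : ∀ g ∈ S, 0 < g.a) (hg : g ∈ P)
    (hid : ¬ g.IsId) :
    g.theta ≤ (const c).theta ∨ (const ((compList S).eval c)).theta + π ≤ g.theta := by
  rcases (self_le_eval_iff hid).mp (H.self_le_eval hS hg) with h₁ | h₁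
  · exact .inl h₁
  rcases (self_le_eval_iff hid).mp (H.eval_le_eval_eval hg) with h₂ | h₂
  · linarith [(theta_const_mem_Ioo c).1, (theta_const_mem_Ioo ((compList S).eval c)).2]
  · exact .inr h₂

lemma theta_after (H : IsOptimalFrom c P S) (hS : ∀ g ∈ S, 0 < g.a) (hg : g ∈ S)
    (hid : ¬ g.IsId) :
    g.theta ∈ Set.Icc (const c).theta ((const ((compList S).eval c)).theta + π) := by
  obtain ⟨A, B, rfl⟩ := List.append_of_mem hg
  have hgB : ∀ k ∈ g :: B, 0 < k.a := fun k hk => hS k (List.mem_append_right _ hk)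
  obtain ⟨hle, hge⟩ := H.eval_mem_Icc hgB
  have hx := (eval_le_self_iff hid).mp (H.eval_le_self (List.forall_mem_cons.mp hgB).2)
  exact ⟨(theta_const_strictAnti.antitone hge).trans hx.1,
    hx.2.trans (by simpa using theta_const_strictAnti.antitone hle)⟩

lemma theta_eq_of_lt (H : IsOptimalFrom c P (A ++ g :: h :: B)) (hhB : ∀ k ∈ h :: B, 0 < k.a)
    (hg : ¬ g.IsId) (hh : ¬ h.IsId) (hlt : h.theta < g.theta) :
    h.theta = (const ((compList A).eval c)).theta ∧
      g.theta = (const ((compList A).eval c)).theta + π := by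
  set x := (compList A).eval c with hx
  have hB := (List.forall_mem_cons.mp hhB).2
  have hgx : g.eval x ≤ x := H.eval_le_self hhB
  have hhx : h.eval (g.eval x) ≤ g.eval x := by
    have H' : IsOptimalFrom c P ((A ++ [g]) ++ h :: B) := by simpa using H
    simpa [compList_append_eval, compList_cons_eval, hx] using H'.eval_le_self hB
  have hg_le := ((eval_le_self_iff hg).mp hgx).2
  have hh_ge := (theta_const_strictAnti.antitone hgx).trans ((eval_le_self_iff hh).mp hhx).1
  have hsin : 0 ≤ sin (h.theta - g.theta + 2 * π) := by
    rw [sin_add_two_pi, ← mul_nonneg_iff_of_pos_left (mul_pos (vecNorm_pos hg) (vecNorm_pos hh)),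
      ← eval_eval_sub_eval_eval g h x, sub_nonneg]
    exact H.eval_eval_le hB
  have hpi := ((sin_nonneg_iff_of_mem_Ioo
    ⟨by linarith [theta_nonneg h, theta_lt_two_pi g, pi_pos], by linarith⟩).mp hsin).2
  constructor <;> linarith

-- If `h.theta < g.theta`, both functions fix the current value `x`, so deleting them keeps the
-- list optimal; as optional functions they then force `c ≤ x` and `x ≤ (compList S).eval c`.
lemma theta_le_theta (H : IsOptimalFrom c P (A ++ g :: h :: B))
    (hS : ∀ k ∈ A ++ g :: h :: B, 0 < k.a) (hc : (compList (A ++ g :: h :: B)).eval c < c)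
    (hg : ¬ g.IsId) (hh : ¬ h.IsId) : g.theta ≤ h.theta := by
  by_contra! hlt
  have hhB : ∀ k ∈ h :: B, 0 < k.a := fun k hk =>
    hS k (List.mem_append_right _ (List.mem_cons_of_mem _ hk))
  obtain ⟨hhx, hgx⟩ := H.theta_eq_of_lt hhB hg hh hlt
  set x := (compList A).eval c with hx
  have heval : (compList (A ++ B)).eval c = (compList (A ++ g :: h :: B)).eval c := by
    rw [compList_append_eval, compList_append_eval, compList_cons_eval, compList_cons_eval,
      ← hx, eval_eq_self_of_theta (.inr hgx), eval_eq_self_of_theta (.inl hhx)]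
  have H' : IsOptimalFrom c (g :: h :: P) (A ++ B) := H.of_subperm (List.Perm.subperm (by
    classical
    simp only [List.perm_iff_count, List.count_append, List.count_cons]
    intro k
    ring)) heval
  have hAB : ∀ k ∈ A ++ B, 0 < k.a := fun k hk => hS k (by
    simp only [List.mem_append, List.mem_cons] at hk ⊢
    tauto)
  have hTc := theta_const_mem_Ioo c
  have hTx := theta_const_mem_Ioo x
  rw [← heval] at hc
  have hTw := theta_const_mem_Ioo ((compList (A ++ B)).eval c)
  have hTwc := theta_const_strictAnti hc
  have hh' := H'.theta_before hAB (.tail _ (.head _)) hh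
  have hg' := H'.theta_before hAB (.head _) hg
  simp only [Set.mem_Ioo] at *
  rw [hhx] at hh'
  rw [hgx] at hg'
  rcases hh' with hh' | hh' <;> rcases hg' with hg' | hg' <;> linarith

lemma sorted_of_forall_not_isId (H : IsOptimalFrom c P S) (hS : ∀ g ∈ S, 0 < g.a)
    (hid : ∀ g ∈ S, ¬ g.IsId) (hc : (compList S).eval c < c) :
    S.Pairwise fun g h => g.theta ≤ h.theta := by
  have : IsTrans LinFun fun g h => g.theta ≤ h.theta := ⟨fun _ _ _ => le_trans⟩
  rw [← List.isChain_iff_pairwise, List.isChain_iff_forall_rel_of_append_cons_cons]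
  rintro g h A B rfl
  exact H.theta_le_theta hS hc (hid g (by simp)) (hid h (by simp))

open Classical in
lemma isAngularSplit (H : IsOptimalFrom c P S) (hS : ∀ g ∈ S, 0 < g.a)
    (hc : (compList S).eval c < c) :
    IsAngularSplit c ((const ((compList S).eval c)).theta + π) P S where
  theta_before _ := H.theta_before hS
  theta_after _ := H.theta_after hS
  sorted := by
    have hfilter := congrArg (fun k => k.eval c) (compList_filter_not_isId S)
    have H' : IsOptimalFrom c P (S.filter (¬ ·.IsId)) :=
      H.of_subperm (List.filter_sublist.append_left P).subperm hfilter
    have := H'.sorted_of_forall_not_isId (fun g hg => hS g (List.mem_of_mem_filter hg))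
      (fun g hg => by simpa using List.of_mem_filter hg) (hfilter.trans_lt hc)
    rw [List.pairwise_filter] at this
    simpa using this

end IsOptimalFrom

end IsOptimalFrom

section Permutation

lemma isLeast_setOf_iff {α : Type*} [LinearOrder α] {p : α → Prop} {a : α} :
    IsLeast {i | p i} a ↔ p a ∧ ∀ i, i < a → ¬ p i :=
  and_congr_right fun _ => forall_congr' fun _ => by rw [imp_not_comm, not_lt]; rfl

lemma isGreatest_setOf_iff {α : Type*} [LinearOrder α] {p : α → Prop} {a : α} :
    IsGreatest {i | p i} a ↔ p a ∧ ∀ i, a < i → ¬ p i :=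
  isLeast_setOf_iff (α := αᵒᵈ)

lemma isLeast_setOf_not_iff {α : Type*} [LinearOrder α] {p : α → Prop} {a : α} :
    IsLeast {i | ¬ p i} a ↔ ¬ p a ∧ ∀ i, i < a → p i := by
  simp only [isLeast_setOf_iff, not_not]

lemma isGreatest_setOf_not_iff {α : Type*} [LinearOrder α] {p : α → Prop} {a : α} :
    IsGreatest {i | ¬ p i} a ↔ ¬ p a ∧ ∀ i, a < i → p i :=
  isLeast_setOf_not_iff (α := αᵒᵈ)

lemma exists_isLeast_setOf_perm {n : ℕ} {p : Fin n → Prop} (hp : ∃ i, p i)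
    (σ : Equiv.Perm (Fin n)) : ∃ s, IsLeast {i | p (σ i)} s :=
  (Set.toFinite _).isCompact.exists_isLeast (hp.imp' σ.symm fun i hi => by simpa using hi)

lemma exists_isGreatest_setOf_perm {n : ℕ} {p : Fin n → Prop} (hp : ∃ i, p i)
    (σ : Equiv.Perm (Fin n)) : ∃ t, IsGreatest {i | p (σ i)} t :=
  (Set.toFinite _).isCompact.exists_isGreatest (hp.imp' σ.symm fun i hi => by simpa using hi)

lemma exists_perm_ofFn_eq {α : Type*} {n : ℕ} {g : Fin n → α} {L : List α}
    (hL : L.Perm (List.ofFn g)) : ∃ σ : Equiv.Perm (Fin n), List.ofFn (g ∘ σ) = L := by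
  rw [List.ofFn_eq_map] at hL
  obtain ⟨l, rfl, hl⟩ : ∃ l : List (Fin n), L = l.map g ∧ l.Perm (List.finRange n) := by
    simpa only [Relation.Comp, eq_iff_iff, hL, iff_true] using
      congrFun₂ (List.eq_map_comp_perm g) L (List.finRange n)
  have hlen : l.length = n := by rw [hl.length_eq, List.length_finRange]
  have hnodup : l.Nodup := hl.nodup_iff.mpr (List.nodup_finRange n)
  refine ⟨(finCongr hlen.symm).trans (hnodup.getEquivOfForallMemList l fun i =>
    hl.mem_iff.mpr (List.mem_finRange i)), ?_⟩
  exact List.ext_getElem (by simp [hlen]) (by simp)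

lemma finRange_eq_append (n : ℕ) (q : Fin n) :
    List.finRange n =
      (List.finRange n).filter (· < q) ++ q :: (List.finRange n).filter (q < ·) := by
  refine (List.sortedLT_finRange n).eq_of_mem_iff (List.Pairwise.sortedLT ?_) fun i => ?_
  · simp only [List.pairwise_append, List.pairwise_cons, List.mem_filter, List.mem_cons,
      decide_eq_true_iff]
    have hsorted := List.pairwise_lt_finRange n
    refine ⟨hsorted.filter _, ⟨fun i hi => hi.2, hsorted.filter _⟩, ?_⟩
    rintro i hi j (rfl | hj)
    exacts [hi.2, hi.2.trans hj.2]
  · simpa using lt_trichotomy i q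

variable {n : ℕ} {f : Fin n → LinFun} {σ τ : Equiv.Perm (Fin n)} {q : Fin n} {bmin : ℝ}

/-- The functions that `σ` places before position `q`, in order. -/
def before (f : Fin n → LinFun) (σ : Equiv.Perm (Fin n)) (q : Fin n) : List LinFun :=
  ((List.finRange n).filter (· < q)).map fun i => f (σ i)

/-- The functions that `σ` places after position `q`, in order. -/
def after (f : Fin n → LinFun) (σ : Equiv.Perm (Fin n)) (q : Fin n) : List LinFun :=
  ((List.finRange n).filter (q < ·)).map fun i => f (σ i)

lemma forall_mem_before {p : LinFun → Prop} :
    (∀ g ∈ before f σ q, p g) ↔ ∀ i < q, p (f (σ i)) := by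
  simp [before]

lemma forall_mem_after {p : LinFun → Prop} :
    (∀ g ∈ after f σ q, p g) ↔ ∀ i, q < i → p (f (σ i)) := by
  simp [after]

lemma pairwise_after {R : LinFun → LinFun → Prop} :
    (after f σ q).Pairwise R ↔ ∀ i j, q < i → i < j → R (f (σ i)) (f (σ j)) := by
  rw [after, List.pairwise_map, List.pairwise_filter, ← List.ofFn_id, List.pairwise_ofFn]
  simp only [decide_eq_true_iff, id]
  exact ⟨fun H i j hi hij => H hij hi (hi.trans hij), fun H i j hij hi _ => H i j hi hij⟩

lemma permList_eq_append (f : Fin n → LinFun) (σ : Equiv.Perm (Fin n)) (q : Fin n) :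
    permList f σ = before f σ q ++ f (σ q) :: after f σ q := by
  rw [permList, List.ofFn_eq_map, before, after]
  conv_lhs => rw [finRange_eq_append n q]
  rw [List.map_append, List.map_cons]

lemma permComp_eq_const (hq : (f (σ q)).a = 0) :
    permComp f σ = const ((compList (after f σ q)).eval (f (σ q)).b) := by
  rw [permComp, permList_eq_append f σ q, compList_append_cons_of_a_eq_zero hq]

lemma permComp_trans_eq (hτ : ∀ i, q ≤ i → τ i = i) (hq : (f (σ q)).a = 0) :
    permComp f (τ.trans σ) = permComp f σ := by
  have hqτ : (τ.trans σ) q = σ q := congrArg σ (hτ q le_rfl)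
  have hafter : after f (τ.trans σ) q = after f σ q :=
    List.map_congr_left fun i hi => by
      have hqi : q < i := by simpa using hi
      rw [Equiv.trans_apply, hτ i hqi.le]
  rw [permComp_eq_const (q := q) (by rwa [hqτ]), permComp_eq_const hq, hafter, hqτ]

lemma isGreatest_trans (hτ : ∀ i, q ≤ i → τ i = i) (hq : IsGreatest {i | (f (σ i)).a = 0} q) :
    IsGreatest {i | (f (τ.trans σ i)).a = 0} q := by
  refine ⟨by simpa [hτ q le_rfl] using hq.1, fun i hi => ?_⟩
  by_contra! hqi
  exact hqi.not_ge (hq.2 (by simpa [hτ i hqi.le] using hi))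

lemma theta_permComp_add_pi_mem_Ico (hq : (f (σ q)).a = 0) :
    (permComp f σ).theta + π ∈ Set.Ico 0 (2 * π) := by
  rw [permComp_eq_const hq]
  obtain ⟨h₀, h₁⟩ := theta_const_mem_Ioo ((compList (after f σ q)).eval (f (σ q)).b)
  constructor <;> linarith [pi_pos]

lemma permList_perm (f : Fin n → LinFun) (σ τ : Equiv.Perm (Fin n)) :
    (permList f σ).Perm (permList f τ) :=
  (σ.ofFn_comp_perm f).trans (τ.ofFn_comp_perm f).symm

lemma _root_.IsMinimum.le_of_perm (hσ : IsMinimum f σ) {L : List LinFun}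
    (hL : L.Perm (permList f σ)) : (permComp f σ).b ≤ (compList L).b := by
  obtain ⟨τ, rfl⟩ := exists_perm_ofFn_eq hL
  exact hσ (τ.trans σ)

lemma _root_.IsMinimum.isOptimalFrom (hσ : IsMinimum f σ) (hq : (f (σ q)).a = 0) :
    IsOptimalFrom (f (σ q)).b (before f σ q) (after f σ q) := fun L hL => by
  classical
  set R := (before f σ q ++ after f σ q).diff L
  have hperm : (R ++ L).Perm (before f σ q ++ after f σ q) :=
    List.perm_append_comm.trans
      (List.subperm_append_diff_self_of_count_le (List.subperm_ext_iff.mp hL))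
  have hle : (permComp f σ).b ≤ (compList (R ++ f (σ q) :: L)).b := by
    refine hσ.le_of_perm ?_
    rw [permList_eq_append f σ q]
    exact List.perm_middle.trans ((hperm.cons _).trans List.perm_middle.symm)
  rwa [permComp_eq_const hq, compList_append_cons_of_a_eq_zero hq] at hle

lemma a_pos_of_mem_after (hf : ∀ i, 0 ≤ (f i).a) (hq : IsGreatest {i | (f (σ i)).a = 0} q) :
    ∀ g ∈ after f σ q, 0 < g.a :=
  forall_mem_after.mpr fun i hi => (hf (σ i)).lt_of_ne' fun h => (hq.2 h).not_gt hi

lemma _root_.IsMinimum.eq_const (hσ : IsMinimum f σ) (hf : ∀ i, 0 ≤ (f i).a)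
    (hbmin : IsLeast {b | ∃ i, (f i).a = 0 ∧ (f i).b = b} bmin)
    (hq : IsGreatest {i | (f (σ i)).a = 0} q) : f (σ q) = const bmin := by
  refine LinFun.ext hq.1 (le_antisymm ?_ (hbmin.2 ⟨_, hq.1, rfl⟩))
  obtain ⟨i, hia, hib⟩ := hbmin.1
  obtain ⟨j, rfl⟩ := σ.surjective i
  rcases (hq.2 hia).eq_or_lt with rfl | hjq
  · exact hib.le
  · have hle := (hσ.isOptimalFrom hq.1).self_le_eval (a_pos_of_mem_after hf hq)
      (forall_mem_before (p := (· ∈ before f σ q)).mp (fun _ => id) j hjq)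
    rwa [eval_of_a_eq_zero hia, hib] at hle

lemma _root_.IsMinimum.isAngularSplit (hσ : IsMinimum f σ) (hf : ∀ i, 0 ≤ (f i).a)
    (hbmin : IsLeast {b | ∃ i, (f i).a = 0 ∧ (f i).b = b} bmin)
    (hex : ∃ i, (f i).theta ∈ Set.Ioo (const bmin).theta ((const bmin).theta + π))
    (hq : IsGreatest {i | (f (σ i)).a = 0} q) :
    IsAngularSplit bmin ((permComp f σ).theta + π) (before f σ q) (after f σ q) := by
  have hk := hσ.eq_const hf hbmin hq
  have H := hσ.isOptimalFrom hq.1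
  rw [hk] at H
  rw [permComp_eq_const hq.1, hk]
  refine H.isAngularSplit (a_pos_of_mem_after hf hq) ?_
  obtain ⟨i, hi⟩ := hex
  have hid := not_isId_of_theta_pos ((theta_nonneg _).trans_lt hi.1)
  have hmem : f i ∈ before f σ q ++ after f σ q := by
    have : f i ∈ permList f σ := List.mem_ofFn.mpr ⟨σ.symm i, by simp⟩
    rw [permList_eq_append f σ q, List.perm_middle.mem_iff, hk, List.mem_cons] at this
    refine this.resolve_left fun h => hi.1.ne ?_
    rw [h]
  have hle := H [f i] (List.singleton_sublist.mpr hmem).subperm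
  rw [compList_cons_eval, compList_nil, idf_eval] at hle
  exact hle.trans_lt ((eval_lt_self_iff hid).mpr hi)

lemma isMinimum_iff_isAngularSplit (hf : ∀ i, 0 ≤ (f i).a)
    (hbmin : IsLeast {b | ∃ i, (f i).a = 0 ∧ (f i).b = b} bmin)
    (hex : ∃ i, (f i).theta ∈ Set.Ioo (const bmin).theta ((const bmin).theta + π))
    (hq : IsGreatest {i | (f (σ i)).a = 0} q) :
    IsMinimum f σ ↔ f (σ q) = const bmin ∧
      IsAngularSplit bmin ((permComp f σ).theta + π) (before f σ q) (after f σ q) := by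
  refine ⟨fun hσ => ⟨hσ.eq_const hf hbmin hq, hσ.isAngularSplit hf hbmin hex hq⟩, ?_⟩
  rintro ⟨hk, hsplit⟩
  obtain ⟨τ, -, hτ⟩ := Finset.univ.exists_min_image (fun τ => (permComp f τ).b)
    ⟨σ, Finset.mem_univ σ⟩
  replace hτ : IsMinimum f τ := fun ρ => hτ ρ (Finset.mem_univ ρ)
  obtain ⟨r, hr⟩ := exists_isGreatest_setOf_perm (p := fun i => (f i).a = 0) ⟨σ q, hq.1⟩ τ
  have hkτ := hτ.eq_const hf hbmin hr
  have hsplitτ := hτ.isAngularSplit hf hbmin hex hr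
  have hperm : (before f σ q ++ after f σ q).Perm (before f τ r ++ after f τ r) := by
    have := permList_perm f σ τ
    rw [permList_eq_append f σ q, permList_eq_append f τ r, hk, hkτ] at this
    exact (List.perm_middle.symm.trans (this.trans List.perm_middle)).cons_inv
  rw [permComp_eq_const hq.1, hk] at hsplit
  rw [permComp_eq_const hr.1, hkτ] at hsplitτ
  have hval := hsplit.eq_of_perm (a_pos_of_mem_after hf hq) rfl hsplitτ
    (a_pos_of_mem_after hf hr) rfl hperm
  have hcomp : permComp f σ = permComp f τ := by
    rw [permComp_eq_const hq.1, permComp_eq_const hr.1, hk, hkτ, hval]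
  exact fun ρ => hcomp ▸ hτ ρ

end Permutation

section Counterclockwise

lemma mem_Icc2pi_iff {x y φ : ℝ} (hx : x ∈ Set.Ico 0 (2 * π)) (hy : y ∈ Set.Ico 0 (2 * π))
    (hφ : φ ∈ Set.Ico 0 (2 * π)) :
    φ ∈ Icc2pi x y ↔ (x ≤ φ ∧ φ ≤ y) ∨ (y < x ∧ (x ≤ φ ∨ φ ≤ y)) := by
  obtain ⟨hx0, hx1⟩ := hx
  obtain ⟨hy0, hy1⟩ := hy
  obtain ⟨hφ0, hφ1⟩ := hφ
  constructor
  · rintro ⟨l₁, l₂, ⟨k₁, hk₁⟩, ⟨k₂, hk₂⟩, -, hlt, hl₁, hl₂⟩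
    have int_lt {k m : ℤ} (h : 2 * π * k < 2 * π * m) : k < m :=
      Int.cast_lt.mp (lt_of_mul_lt_mul_left h two_pi_pos.le)
    have hk₁0 : k₁ < 1 := int_lt (by push_cast; linarith)
    have hk₂0 : -1 < k₂ := int_lt (by push_cast; linarith)
    have hk : k₂ < k₁ + 2 := int_lt (by push_cast; linarith)
    obtain ⟨rfl, rfl⟩ | ⟨rfl, rfl⟩ | ⟨rfl, rfl⟩ :
        k₁ = 0 ∧ k₂ = 0 ∨ k₁ = 0 ∧ k₂ = 1 ∨ k₁ = -1 ∧ k₂ = 0 := by omega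
    · push_cast at hk₁ hk₂
      exact .inl ⟨by linarith, by linarith⟩
    · push_cast at hk₁ hk₂
      exact .inr ⟨by linarith, .inl (by linarith)⟩
    · push_cast at hk₁ hk₂
      exact .inr ⟨by linarith, .inr (by linarith)⟩
  · rintro (⟨h₁, h₂⟩ | ⟨hyx, h | h⟩)
    · exact ⟨x, y, ⟨0, by simp⟩, ⟨0, by simp⟩, by linarith, by linarith, h₁, h₂⟩
    · exact ⟨x, y + 2 * π, ⟨0, by simp⟩, ⟨1, by simp⟩, by linarith, by linarith, h, by linarith⟩
    · exact ⟨x - 2 * π, y, ⟨-1, by simp⟩, ⟨0, by simp⟩, by linarith, by linarith, by linarith, h⟩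

variable {n : ℕ} {f : Fin n → LinFun} {μ σ : Equiv.Perm (Fin n)} {φ bmin : ℝ} {q s t : Fin n}
  {m : ℕ}

/-- Read cyclically from position `m` on, `μ` passes the angles of its nonidentical functions
counterclockwise, crossing the direction `φ` only at position `m` itself or between the last and
the first position. -/
structure IsCut (f : Fin n → LinFun) (μ : Equiv.Perm (Fin n)) (φ : ℝ) (m : ℕ) : Prop where
  left : ∀ i : Fin n, i.val < m → ¬ (f (μ i)).IsId → φ ≤ (f (μ i)).theta
  right : ∀ i : Fin n, m ≤ i.val → ¬ (f (μ i)).IsId → (f (μ i)).theta ≤ φ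
  sorted : ∀ i j : Fin n, i ≤ j → j.val < m ∨ m ≤ i.val → ¬ (f (μ i)).IsId → ¬ (f (μ j)).IsId →
    (f (μ i)).theta ≤ (f (μ j)).theta

lemma exists_isCut (hs : IsLeast {i | ¬ (f (μ i)).IsId} s)
    (ht : IsGreatest {i | ¬ (f (μ i)).IsId} t) (hφ : φ ∈ Set.Ico 0 (2 * π))
    (hμ : Counterclockwise f μ) (hst : φ ∈ Icc2pi (f (μ t)).theta (f (μ s)).theta) :
    ∃ m, IsCut f μ φ m := by
  obtain ⟨m, hm⟩ := hμ
  rw [mem_Icc2pi_iff (theta_mem_Ico _) (theta_mem_Ico _) hφ] at hst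
  by_cases hwrap : s.val < m ∧ m ≤ t.val
  · have hts := hm t s ht.1 hs.1 (.inr (.inr hwrap.symm))
    obtain ⟨htφ, hφs⟩ := hst.resolve_right fun h => h.1.not_ge hts
    exact ⟨m, fun i hi hid => hφs.trans (hm s i hs.1 hid (.inr (.inl ⟨hs.2 hid, hi⟩))),
      fun i hi hid => (hm i t hid ht.1 (.inl ⟨hi, ht.2 hid⟩)).trans htφ,
      fun i j hij h hi hj => hm i j hi hj (h.elim (fun h => .inr (.inl ⟨hij, h⟩))
        fun h => .inl ⟨h, hij⟩)⟩
  · have hmono : ∀ i j, i ≤ j → ¬ (f (μ i)).IsId → ¬ (f (μ j)).IsId →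
        (f (μ i)).theta ≤ (f (μ j)).theta := fun i j hij hi hj => by
      have hsi : s.val ≤ i.val := hs.2 hi
      have hjt : j.val ≤ t.val := ht.2 hj
      exact hm i j hi hj (by omega)
    obtain htφ | hφs : (f (μ t)).theta ≤ φ ∨ φ ≤ (f (μ s)).theta := by tauto
    · exact ⟨0, fun i hi => absurd hi (Nat.not_lt_zero _),
        fun i _ hid => (hmono i t (ht.2 hid) hid ht.1).trans htφ,
        fun i j hij _ => hmono i j hij⟩
    · exact ⟨n, fun i _ hid => hφs.trans (hmono s i (hs.2 hid) hs.1 hid),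
        fun i hi => absurd i.isLt hi.not_gt, fun i j hij _ => hmono i j hij⟩

lemma IsCut.counterclockwise (h : IsCut f μ φ m) : Counterclockwise f μ := by
  refine ⟨m, fun i j hi hj hcases => ?_⟩
  rcases hcases with ⟨hmi, hij⟩ | ⟨hij, hjm⟩ | ⟨hmi, hjm⟩
  · exact h.sorted i j hij (.inr hmi) hi hj
  · exact h.sorted i j hij (.inl hjm) hi hj
  · exact (h.right i hmi hi).trans (h.left j hjm hj)

lemma IsCut.mem_Icc2pi (h : IsCut f μ φ m) (hs : IsLeast {i | ¬ (f (μ i)).IsId} s)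
    (ht : IsGreatest {i | ¬ (f (μ i)).IsId} t) (hφ : φ ∈ Set.Ico 0 (2 * π))
    (hne : ∃ i j, ¬ (f i).IsId ∧ ¬ (f j).IsId ∧ (f i).theta < (f j).theta) :
    φ ∈ Icc2pi (f (μ t)).theta (f (μ s)).theta := by
  rw [mem_Icc2pi_iff (theta_mem_Ico _) (theta_mem_Ico _) hφ]
  by_cases hwrap : s.val < m ∧ m ≤ t.val
  · exact .inl ⟨h.right t hwrap.2 ht.1, h.left s hwrap.1 hs.1⟩
  have hside : t.val < m ∨ m ≤ s.val := by omega
  obtain ⟨i, j, hi, hj, hij⟩ := hne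
  obtain ⟨i, rfl⟩ := μ.surjective i
  obtain ⟨j, rfl⟩ := μ.surjective j
  have hsi : s ≤ i := hs.2 hi
  have hit : i ≤ t := ht.2 hi
  have hsj : s ≤ j := hs.2 hj
  have hjt : j ≤ t := ht.2 hj
  rw [Fin.le_def] at hsi hit hsj hjt
  have hst : (f (μ s)).theta < (f (μ t)).theta :=
    (h.sorted s i hsi (by omega) hs.1 hi).trans_lt
      (hij.trans_le (h.sorted j t hjt (by omega) hj ht.1))
  exact .inr ⟨hst, hside.symm.imp (fun hms => h.right t (by omega) ht.1)
    fun htm => h.left s (by omega) hs.1⟩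

lemma IsCut.isAngularSplit (hbmin : IsLeast {b | ∃ i, (f i).a = 0 ∧ (f i).b = b} bmin)
    (hq : IsGreatest {i | (f (μ i)).a = 0} q) (h : IsCut f μ φ m) (hφ : π ≤ φ) :
    f (μ q) = const bmin ∧ IsAngularSplit bmin φ (before f μ q) (after f μ q) := by
  have hconst {i} (hi : (f i).a = 0) : f i = const (f i).b := LinFun.ext hi rfl
  have hright {i} (hi : (f (μ i)).a = 0) : m ≤ i.val := by
    by_contra! him
    have := h.left i him (not_isId_of_a_eq_zero hi)
    rw [hconst hi] at this
    linarith [(theta_const_mem_Ioo (f (μ i)).b).2]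
  have hmq := hright hq.1
  have hqid := not_isId_of_a_eq_zero hq.1
  have hk : f (μ q) = const bmin := by
    obtain ⟨i, hia, hib⟩ := hbmin.1
    obtain ⟨p, rfl⟩ := μ.surjective i
    have hθ := h.sorted p q (hq.2 hia) (.inr (hright hia)) (not_isId_of_a_eq_zero hia) hqid
    rw [hconst hia, hconst hq.1, theta_const_strictAnti.le_iff_ge, hib] at hθ
    rw [hconst hq.1, hθ.antisymm (hbmin.2 ⟨_, hq.1, rfl⟩)]
  have hmi {i} (hqi : q < i) : m ≤ i.val := hmq.trans hqi.le
  refine ⟨hk, forall_mem_before.mpr fun i hiq hid => ?_, forall_mem_after.mpr fun i hqi hid => ?_,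
    pairwise_after.mpr fun i j hqi hij => h.sorted i j hij.le (.inr (hmi hqi))⟩
  · rw [← hk]
    exact (lt_or_ge i.val m).symm.imp (fun hmi => h.sorted i q hiq.le (.inr hmi) hid hqid)
      fun him => h.left i him hid
  · rw [← hk]
    exact ⟨h.sorted q i hqi.le (.inr hmq) hqid hid, h.right i (hmi hqi) hid⟩

lemma exists_perm_monotoneOn_Iio {α : Type*} [LinearOrder α] (q : Fin n) (key : Fin n → α) :
    ∃ τ : Equiv.Perm (Fin n), (∀ i, q ≤ i → τ i = i) ∧ MonotoneOn (key ∘ τ) (Set.Iio q) := by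
  let e : Fin q.val ↪ Fin n := Fin.castLEEmb q.isLt.le
  let ρ := Tuple.sort (key ∘ e)
  refine ⟨ρ.viaFintypeEmbedding e, fun i hi => ?_, fun i hi j hj hij => ?_⟩
  · refine ρ.viaFintypeEmbedding_apply_notMem_range e ?_
    rintro ⟨j, rfl⟩
    exact j.isLt.not_ge hi
  · have happly (k) (hk : k < q) : ρ.viaFintypeEmbedding e k = e (ρ ⟨k, hk⟩) :=
      ρ.viaFintypeEmbedding_apply_image e ⟨k, hk⟩
    rw [Function.comp_apply, Function.comp_apply, happly i hi, happly j hj]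
    exact Tuple.monotone_sort (key ∘ e) (a := ⟨i, hi⟩) (b := ⟨j, hj⟩) hij

lemma exists_forall_iff_val_lt {p : Fin n → Prop} (hp : ∀ i j, i ≤ j → p j → p i) :
    ∃ m : ℕ, ∀ i, p i ↔ i.val < m := by
  rcases IsLowerSet.eq_univ_or_Iio (s := {i | p i}) fun j i hij hj => hp i j hij hj with h | ⟨a, h⟩
  · exact ⟨n, fun i => iff_of_true (h.ge (Set.mem_univ i)) i.isLt⟩
  · exact ⟨a, fun i => Set.ext_iff.mp h i⟩

lemma IsAngularSplit.theta_mem_Icc (hk : f (σ q) = const bmin) (hφ : π ≤ φ)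
    (h : IsAngularSplit bmin φ (before f σ q) (after f σ q)) {i : Fin n} (hi : q ≤ i)
    (hid : ¬ (f (σ i)).IsId) : (f (σ i)).theta ∈ Set.Icc (const bmin).theta φ := by
  rcases hi.eq_or_lt with rfl | hqi
  · rw [hk]
    exact ⟨le_rfl, (theta_const_mem_Ioo bmin).2.le.trans hφ⟩
  · exact forall_mem_after.mp h.theta_after i hqi hid

lemma IsAngularSplit.theta_le_theta (hk : f (σ q) = const bmin) (hφ : π ≤ φ)
    (h : IsAngularSplit bmin φ (before f σ q) (after f σ q)) {i j : Fin n} (hi : q ≤ i)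
    (hij : i ≤ j) (hid : ¬ (f (σ i)).IsId) (hjd : ¬ (f (σ j)).IsId) :
    (f (σ i)).theta ≤ (f (σ j)).theta := by
  rcases hi.eq_or_lt with rfl | hqi
  · rw [hk]
    exact (h.theta_mem_Icc hk hφ hij hjd).1
  rcases hij.eq_or_lt with rfl | hij
  · exact le_rfl
  · exact pairwise_after.mp h.sorted i j hqi hij hid hjd

lemma exists_perm_sorted_prefix (f : Fin n → LinFun) (σ : Equiv.Perm (Fin n)) (φ : ℝ)
    (q : Fin n) :
    ∃ τ : Equiv.Perm (Fin n), (∀ i, q ≤ i → τ i = i) ∧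
      ∃ m, (∀ i, i.val < m ↔ i < q ∧ φ ≤ (f (σ (τ i))).theta) ∧
        ∀ i j, i ≤ j → j < q → j.val < m ∨ m ≤ i.val →
          (f (σ (τ i))).theta ≤ (f (σ (τ j))).theta := by
  -- The key is the angle with its branch cut moved from `0` to `φ`.
  let key (i : Fin n) : ℝ :=
    if φ ≤ (f (σ i)).theta then (f (σ i)).theta - 2 * π else (f (σ i)).theta
  obtain ⟨τ, hτ, hmono⟩ := exists_perm_monotoneOn_Iio q key
  have hkey (i) : φ ≤ (f (σ i)).theta ↔ key i < 0 := by
    simp only [key]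
    split_ifs with h <;> simp [h, theta_lt_two_pi, theta_nonneg]
  obtain ⟨m, hm⟩ := exists_forall_iff_val_lt (p := fun i => i < q ∧ φ ≤ (f (σ (τ i))).theta)
    fun i j hij hj => by
      have hiq := hij.trans_lt hj.1
      exact ⟨hiq, (hkey _).mpr ((hmono hiq hj.1 hij).trans_lt ((hkey _).mp hj.2))⟩
  refine ⟨τ, hτ, m, fun i => (hm i).symm, fun i j hij hjq hside => ?_⟩
  have hle : key (τ i) ≤ key (τ j) := hmono (hij.trans_lt hjq) hjq hij
  have hiq := hij.trans_lt hjq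
  have hi : φ ≤ (f (σ (τ i))).theta ↔ i.val < m := by simpa [hiq] using hm i
  have hj : φ ≤ (f (σ (τ j))).theta ↔ j.val < m := by simpa [hjq] using hm j
  have hij' : i.val ≤ j.val := hij
  simp only [key, hi, hj] at hle
  rcases hside with hjm | hmi
  · simpa [hjm, hij'.trans_lt hjm] using hle
  · simpa [hmi.not_gt, (hmi.trans hij').not_gt] using hle

lemma IsAngularSplit.exists_isCut (hk : f (σ q) = const bmin) (hφ : π ≤ φ)
    (h : IsAngularSplit bmin φ (before f σ q) (after f σ q)) :
    ∃ τ : Equiv.Perm (Fin n), (∀ i, q ≤ i → τ i = i) ∧ ∃ m, IsCut f (τ.trans σ) φ m := by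
  obtain ⟨τ, hτ, m, hm, hsorted⟩ := exists_perm_sorted_prefix f σ φ q
  have hτlt {i} (hi : i < q) : τ i < q := by
    by_contra! hq
    exact hi.not_ge (τ.injective (hτ _ hq) ▸ hq)
  have hlt {i : Fin n} (hiq : i < q) (hmi : m ≤ i.val) : (f (σ (τ i))).theta < φ :=
    not_le.mp fun hφi => hmi.not_gt ((hm i).mpr ⟨hiq, hφi⟩)
  refine ⟨τ, hτ, m, fun i hi _ => ((hm i).mp hi).2, fun i hmi hid => ?_,
    fun i j hij hside hid hjd => ?_⟩ <;> simp only [Equiv.trans_apply] at *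
  · rcases lt_or_ge i q with hiq | hqi
    · exact (hlt hiq hmi).le
    · rw [hτ i hqi] at hid ⊢
      exact (h.theta_mem_Icc hk hφ hqi hid).2
  · rcases lt_or_ge j q with hjq | hqj
    · exact hsorted i j hij hjq hside
    have hmi : m ≤ i.val := hside.resolve_left fun hjm => ((hm j).mp hjm).1.not_ge hqj
    rw [hτ j hqj] at hjd ⊢
    rcases lt_or_ge i q with hiq | hqi
    · exact ((forall_mem_before.mp h.theta_before _ (hτlt hiq) hid).resolve_right
        (hlt hiq hmi).not_ge).trans (h.theta_mem_Icc hk hφ hqj hjd).1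
    · rw [hτ i hqi] at hid ⊢
      exact h.theta_le_theta hk hφ hqi hij hid hjd

lemma isMinimum_iff_exists_isCut (hf : ∀ i, 0 ≤ (f i).a)
    (hbmin : IsLeast {b | ∃ i, (f i).a = 0 ∧ (f i).b = b} bmin)
    (hex : ∃ i, (f i).theta ∈ Set.Ioo (const bmin).theta ((const bmin).theta + π))
    (hq : IsGreatest {i | (f (σ i)).a = 0} q) :
    IsMinimum f σ ↔ ∃ τ : Equiv.Perm (Fin n), (∀ i, q ≤ i → τ i = i) ∧
      ∃ m, IsCut f (τ.trans σ) ((permComp f (τ.trans σ)).theta + π) m := by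
  have hφ : π ≤ (permComp f σ).theta + π := le_add_of_nonneg_left (theta_nonneg _)
  constructor
  · intro hσ
    obtain ⟨hk, hsplit⟩ := (isMinimum_iff_isAngularSplit hf hbmin hex hq).mp hσ
    obtain ⟨τ, hτ, hcut⟩ := hsplit.exists_isCut hk hφ
    exact ⟨τ, hτ, by rwa [permComp_trans_eq hτ hq.1]⟩
  · rintro ⟨τ, hτ, m, hcut⟩
    have hcomp := permComp_trans_eq hτ hq.1
    rw [← hcomp] at hφ
    have hmin := (isMinimum_iff_isAngularSplit hf hbmin hex (isGreatest_trans hτ hq)).mpr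
      (hcut.isAngularSplit hbmin (isGreatest_trans hτ hq) hφ)
    exact fun ρ => hcomp ▸ hmin ρ

lemma exists_theta_lt_theta (hbmin : ∃ i, (f i).a = 0 ∧ (f i).b = bmin)
    (hex : ∃ i, (f i).theta ∈ Set.Ioo (const bmin).theta ((const bmin).theta + π)) :
    ∃ i j, ¬ (f i).IsId ∧ ¬ (f j).IsId ∧ (f i).theta < (f j).theta := by
  obtain ⟨i, hia, hib⟩ := hbmin
  obtain ⟨j, hj, -⟩ := hex
  refine ⟨i, j, not_isId_of_a_eq_zero hia,
    not_isId_of_theta_pos ((theta_nonneg _).trans_lt hj), ?_⟩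
  rwa [show f i = const bmin from LinFun.ext hia hib]

end Counterclockwise

end LinFun

open LinFun

/-- characterization of optimal permutations for monotone nondecreasing
linear functions when `β_OPT < β_min`. Here `bmin` is `β_min`, `σ = ρ.trans μ` is the
composition `μ ∘ ρ`, and `q` is `q_μ`, the last position of `μ` carrying a constant. -/
theorem stmt16 {n : ℕ} (f : Fin n → LinFun) (hf : ∀ i, 0 ≤ (f i).a)
    (hconst : ∃ i, (f i).a = 0) (bmin : ℝ)
    (hbmin1 : ∃ i, (f i).a = 0 ∧ (f i).b = bmin)
    (hbmin2 : ∀ i, (f i).a = 0 → bmin ≤ (f i).b)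
    (hex : ∃ i : Fin n, (f i).theta ∈
      Set.Ioo (LinFun.theta ⟨0, bmin⟩) (LinFun.theta ⟨0, bmin⟩ + Real.pi))
    (σ : Equiv.Perm (Fin n)) :
    IsMinimum f σ ↔
      ∃ μ ρ : Equiv.Perm (Fin n), σ = ρ.trans μ ∧ Counterclockwise f μ ∧
        (∃ s t : Fin n,
          (¬ (f (μ s)).IsId ∧ ∀ i, i < s → (f (μ i)).IsId) ∧
          (¬ (f (μ t)).IsId ∧ ∀ i, t < i → (f (μ i)).IsId) ∧
          (permComp f μ).theta + Real.pi ∈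
            Icc2pi ((f (μ t)).theta) ((f (μ s)).theta)) ∧
        (∀ q : Fin n, ((f (μ q)).a = 0 ∧ ∀ j, q < j → (f (μ j)).a ≠ 0) →
          ∀ i : Fin n, q ≤ i → ρ i = i) := by
  have hbmin : IsLeast {b | ∃ i, (f i).a = 0 ∧ (f i).b = b} bmin :=
    ⟨hbmin1, fun _ ⟨i, hi, hb⟩ => hb ▸ hbmin2 i hi⟩
  have hne := exists_theta_lt_theta hbmin1 hex
  have hid : ∃ i, ¬ (f i).IsId := let ⟨i, _, hi, _⟩ := hne; ⟨i, hi⟩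
  constructor
  · intro hσ
    obtain ⟨q, hq⟩ := exists_isGreatest_setOf_perm hconst σ
    obtain ⟨τ, hτ, m, hcut⟩ := (isMinimum_iff_exists_isCut hf hbmin hex hq).mp hσ
    have hqτ := isGreatest_trans hτ hq
    obtain ⟨s, hs⟩ := exists_isLeast_setOf_perm hid (τ.trans σ)
    obtain ⟨t, ht⟩ := exists_isGreatest_setOf_perm hid (τ.trans σ)
    refine ⟨τ.trans σ, τ.symm, by simp [← Equiv.trans_assoc], hcut.counterclockwise,
      ⟨s, t, isLeast_setOf_not_iff.mp hs, isGreatest_setOf_not_iff.mp ht, hcut.mem_Icc2pi hs ht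
        (theta_permComp_add_pi_mem_Ico hqτ.1) hne⟩, fun r hr i hi => ?_⟩
    rw [(isGreatest_setOf_iff.mpr hr).unique hqτ] at hi
    rw [Equiv.symm_apply_eq, hτ i hi]
  · rintro ⟨μ, ρ, rfl, hμ, ⟨s, t, hs, ht, hst⟩, hρ⟩
    obtain ⟨q, hq⟩ := exists_isGreatest_setOf_perm hconst μ
    have hρq := hρ q (isGreatest_setOf_iff.mp hq)
    obtain ⟨m, hcut⟩ := exists_isCut (isLeast_setOf_not_iff.mpr hs)
      (isGreatest_setOf_not_iff.mpr ht) (theta_permComp_add_pi_mem_Ico hq.1) hμ hst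
    refine (isMinimum_iff_exists_isCut hf hbmin hex (isGreatest_trans hρq hq)).mpr
      ⟨ρ.symm, fun i hi => by rw [Equiv.symm_apply_eq, hρq i hi], m, ?_⟩
    simpa [← Equiv.trans_assoc] using hcut
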